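/- Corrected Hund–von Neumann–Wigner theorem for 2×2 real symmetric pencils: let F and G be real symmetric 2×2 matrices and suppose that for some real t₀ the matrix F + t₀•G has a repeated eigenvalue (its characteristic polynomial is (X − C(μ))² for some μ ∈ ℝ). Then the flow is structurally decomposable via an orthogonal similarity: there exists one fixed orthogonal 2×2 real matrix U such that Uᵀ * (F + t•G) * U is a diagonal matrix for every real t. -/

import Mathlib

open Matrix

/-!
A Hermitian matrix with a single eigenvalue is scalar. If `F + t₀ • G` equals `μ • 1`, then
`F + t • G = μ • 1 + (t - t₀) • G` for every `t`, so a unitary matrix diagonalizing `G` alone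
diagonalizes the whole pencil.
-/

section GeneralPencil

open Polynomial

variable {n : Type*} [Fintype n] [DecidableEq n]

theorem spectrum_subset_singleton_of_charpoly_eq_X_sub_C_pow {K : Type*} [Field K]
    {A : Matrix n n K} {μ : K} {k : ℕ} (hA : A.charpoly = (X - C μ) ^ k) :
    spectrum K A ⊆ {μ} := by
  intro x hx
  have hroot : (x - μ) ^ k = 0 := by
    simpa [hA] using Matrix.mem_spectrum_iff_isRoot_charpoly.mp hx
  exact sub_eq_zero.mp (eq_zero_of_pow_eq_zero hroot)

theorem conjTranspose_mul_smul_one_add_smul_mul {R : Type*} [CommRing R] [StarRing R]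
    {U : Matrix n n R} (hU : U ∈ unitaryGroup n R) (a b : R) (A : Matrix n n R) :
    Uᴴ * (a • 1 + b • A) * U = a • 1 + b • (Uᴴ * A * U) := by
  have hUU : Uᴴ * U = 1 := mem_unitaryGroup_iff'.mp hU
  simp only [Matrix.mul_add, Matrix.add_mul, Matrix.mul_smul, Matrix.smul_mul, Matrix.mul_one, hUU]

variable {𝕜 : Type*} [RCLike 𝕜]

theorem eq_smul_one_of_isHermitian_of_spectrum_subset_singleton {H : Matrix n n 𝕜}
    (hH : H.IsHermitian) {μ : 𝕜} (hμ : spectrum 𝕜 H ⊆ {μ}) : H = μ • 1 := by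
  have heigenvalues : RCLike.ofReal ∘ hH.eigenvalues = fun _ => μ := by
    funext i
    refine hμ ?_
    rw [hH.spectrum_eq_image_range]
    exact ⟨_, ⟨i, rfl⟩, rfl⟩
  rw [hH.spectral_theorem, heigenvalues, ← smul_one_eq_diagonal, map_smul, map_one]

theorem exists_unitary_isDiag_of_isHermitian {G : Matrix n n 𝕜} (hG : G.IsHermitian) :
    ∃ U ∈ unitaryGroup n 𝕜, (Uᴴ * G * U).IsDiag := by
  refine ⟨hG.eigenvectorUnitary, hG.eigenvectorUnitary.2, ?_⟩
  have hdiagonal := hG.conjStarAlgAut_star_eigenvectorUnitary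
  rw [Unitary.conjStarAlgAut_star_apply, star_eq_conjTranspose] at hdiagonal
  rw [hdiagonal]
  exact isDiag_diagonal _

theorem symmetric_pencil_crossing_implies_decomposable_general {F G : Matrix n n 𝕜}
    (hF : F.IsHermitian) (hG : G.IsHermitian) {t₀ : 𝕜} (ht₀ : IsSelfAdjoint t₀) {μ : 𝕜}
    (hcross : (F + t₀ • G).charpoly = (X - C μ) ^ Fintype.card n) :
    ∃ U ∈ unitaryGroup n 𝕜, ∀ t : 𝕜, (Uᴴ * (F + t • G) * U).IsDiag := by
  have hscalar : F + t₀ • G = μ • 1 :=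
    eq_smul_one_of_isHermitian_of_spectrum_subset_singleton (hF.add (ht₀.smul hG))
      (spectrum_subset_singleton_of_charpoly_eq_X_sub_C_pow hcross)
  obtain ⟨U, hU, hdiag⟩ := exists_unitary_isDiag_of_isHermitian hG
  refine ⟨U, hU, fun t => ?_⟩
  have hpencil : F + t • G = μ • 1 + (t - t₀) • G := by
    rw [← hscalar, sub_smul]
    abel
  rw [hpencil, conjTranspose_mul_smul_one_add_smul_mul hU]
  exact (isDiag_smul_one n μ).add (hdiag.smul (t - t₀))

end GeneralPencil

/-- Corrected Hund–von Neumann–Wigner theorem for 2×2 real symmetric pencils: if the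
symmetric pencil `F + t•G` has a repeated eigenvalue at some `t₀`, then the flow is
structurally decomposable via an orthogonal similarity: one fixed orthogonal `U`
diagonalizes `F + t•G` for every real `t`. -/
theorem symmetric_pencil_crossing_implies_decomposable
    (F G : Matrix (Fin 2) (Fin 2) ℝ) (hF : Fᵀ = F) (hG : Gᵀ = G)
    (t₀ : ℝ) (μ : ℝ)
    (hcross : (F + t₀ • G).charpoly = (Polynomial.X - Polynomial.C μ) ^ 2) :
    ∃ U : Matrix (Fin 2) (Fin 2) ℝ, Uᵀ * U = 1 ∧
      ∀ t : ℝ, ∀ i j : Fin 2, i ≠ j → (Uᵀ * (F + t • G) * U) i j = 0 := by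
  obtain ⟨U, hU, hdiag⟩ :=
    symmetric_pencil_crossing_implies_decomposable_general hF hG (.all t₀) hcross
  exact ⟨U, mem_unitaryGroup_iff'.mp hU, fun t _ _ hij => hdiag t hij⟩
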